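/- arXiv:1007.2207 — 6 statements merged into one kernel-verified Lean document; each statement's English description precedes it below -/
import Mathlib

section
/- Let X be a metric space with basepoint t₀ and U : X → ℓ∞(𝓛) the universal embedding. Let λ ≥ 1 and let Z be a real normed space that is λ-injective, witnessed as follows: there exist an index set Γ, a linear isometry I : Z → ℓ∞(Γ), and a bounded linear map P : ℓ∞(Γ) → Z with P ∘ I = id_Z and ‖P‖ ≤ λ. Then for every 1-Lipschitz map g : X → Z there exists an affine map g̃ : ℓ∞(𝓛) → Z which is λ-Lipschitz and satisfies g = g̃ ∘ U. -/
open scoped ENNReal NNReal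

/-- The index set `𝓛`: 1-Lipschitz real functions on `X` vanishing at the basepoint `t₀`. -/
def LipL {X : Type*} [MetricSpace X] (t₀ : X) : Type _ :=
  {f : X → ℝ // LipschitzWith 1 f ∧ f t₀ = 0}

/-- The universal embedding `U : X → ℓ∞(𝓛)`, `U(t) = (f(t))_{f ∈ 𝓛}`. -/
noncomputable def univEmb {X : Type*} [MetricSpace X] (t₀ : X) (t : X) :
    lp (fun _ : LipL t₀ => ℝ) ∞ :=
  ⟨fun f => f.1 t, memℓp_infty (by
    refine ⟨dist t t₀, ?_⟩
    rintro r ⟨f, rfl⟩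
    have h := f.2.1.dist_le_mul t t₀
    rw [Real.dist_eq, f.2.2, sub_zero] at h
    simpa [Real.norm_eq_abs] using h)⟩

/-!
Every coordinate of a `1`-Lipschitz map `f : X → ℓ∞(Γ)`, shifted to vanish at `t₀`, is one of the
functions indexing `ℓ∞(𝓛)`. Hence `f - f t₀` is obtained from `U` merely by selecting coordinates
along a map `Γ → 𝓛`, and selecting coordinates is a linear contraction `R : ℓ∞(𝓛) → ℓ∞(Γ)`.
For `P : ℓ∞(Γ) → Z` linear, `v ↦ P (R v) + P (f t₀)` therefore extends `P ∘ f` along `U`;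
the case of `λ`-injective `Z` is `f = I ∘ g`.
-/

section Reindexing

variable (𝕜 : Type*) {Γ Λ : Type*} (E : Λ → Type*) [NontriviallyNormedField 𝕜]
  [∀ i, NormedAddCommGroup (E i)] [∀ i, NormedSpace 𝕜 (E i)]

/-- Precomposition with `φ : Γ → Λ`, as a continuous linear map between spaces of bounded families.
The map `φ` is arbitrary: coordinates may be dropped or repeated. -/
noncomputable def linftyReindex (φ : Γ → Λ) : lp E ∞ →L[𝕜] lp (fun γ => E (φ γ)) ∞ :=
  LinearMap.mkContinuous
    { toFun v := ⟨fun γ => v (φ γ),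
        memℓp_infty ((lp.memℓp v).bddAbove.mono (Set.range_comp_subset_range φ (‖v ·‖)))⟩
      map_add' _ _ := rfl
      map_smul' _ _ := rfl }
    1 fun v => by
      rw [one_mul]
      exact lp.norm_le_of_forall_le (norm_nonneg v) fun γ =>
        lp.norm_apply_le_norm ENNReal.top_ne_zero v (φ γ)

lemma linftyReindex_apply (φ : Γ → Λ) (v : lp E ∞) (γ : Γ) :
    linftyReindex 𝕜 E φ v γ = v (φ γ) := rfl

lemma norm_linftyReindex_le_one (φ : Γ → Λ) : ‖linftyReindex 𝕜 E φ‖ ≤ 1 :=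
  LinearMap.mkContinuous_norm_le _ zero_le_one _

end Reindexing

section UniversalEmbedding

variable {X : Type*} [MetricSpace X] (t₀ : X)

lemma univEmb_apply (t : X) (f : LipL t₀) : univEmb t₀ t f = f.1 t := rfl

/-- The element `f - f t₀` of `𝓛` determined by a `1`-Lipschitz function `f : X → ℝ`. -/
def LipL.ofLipschitz {f : X → ℝ} (hf : LipschitzWith 1 f) : LipL t₀ :=
  ⟨fun x => f x - f t₀, by simpa using hf.sub (LipschitzWith.const (f t₀)), sub_self _⟩

lemma LipL.ofLipschitz_apply {f : X → ℝ} (hf : LipschitzWith 1 f) (x : X) :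
    (LipL.ofLipschitz t₀ hf).1 x = f x - f t₀ := rfl

theorem exists_norm_le_one_apply_univEmb_eq_sub {Γ : Type*} {f : X → lp (fun _ : Γ => ℝ) ∞}
    (hf : LipschitzWith 1 f) :
    ∃ R : lp (fun _ : LipL t₀ => ℝ) ∞ →L[ℝ] lp (fun _ : Γ => ℝ) ∞,
      ‖R‖ ≤ 1 ∧ ∀ x, R (univEmb t₀ x) = f x - f t₀ := by
  have hcoord : ∀ γ, LipschitzWith 1 fun x => f x γ := (LipschitzWith.coordinate 1).1 hf
  refine ⟨linftyReindex ℝ _ fun γ => LipL.ofLipschitz t₀ (hcoord γ),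
    norm_linftyReindex_le_one .., fun x => ?_⟩
  ext γ
  simp only [linftyReindex_apply, univEmb_apply, LipL.ofLipschitz_apply, lp.coeFn_sub,
    Pi.sub_apply]

theorem universal_embedding_extend_injective_general
    {Z : Type*} [SeminormedAddCommGroup Z] [NormedSpace ℝ Z] {lam : ℝ≥0} {Γ : Type*}
    {P : lp (fun _ : Γ => ℝ) ∞ →L[ℝ] Z} (hP : ‖P‖ ≤ lam)
    {f : X → lp (fun _ : Γ => ℝ) ∞} (hf : LipschitzWith 1 f) :
    ∃ (L : lp (fun _ : LipL t₀ => ℝ) ∞ →ₗ[ℝ] Z) (c : Z),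
      LipschitzWith lam (fun v => L v + c) ∧ ∀ x : X, P (f x) = L (univEmb t₀ x) + c := by
  obtain ⟨R, hR, hRU⟩ := exists_norm_le_one_apply_univEmb_eq_sub t₀ hf
  have hPR : ‖P ∘L R‖ ≤ lam :=
    calc ‖P ∘L R‖ ≤ ‖P‖ * ‖R‖ := P.opNorm_comp_le R
      _ ≤ lam * 1 := by gcongr
      _ = lam := mul_one _
  refine ⟨(P ∘L R).toLinearMap, P (f t₀), ?_, fun x => ?_⟩
  · simpa using (ContinuousLinearMap.lipschitzWith_of_opNorm_le hPR).add
      (LipschitzWith.const (P (f t₀)))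
  · simp [hRU]

end UniversalEmbedding

/-- Let `Z` be a real normed space which is `λ`-injective (`λ ≥ 1`),
witnessed by a linear isometry `I : Z → ℓ∞(Γ)` and a bounded linear projection
`P : ℓ∞(Γ) → Z` with `P ∘ I = id` and `‖P‖ ≤ λ`. Then every 1-Lipschitz `g : X → Z`
factors as `g = g̃ ∘ U` with `g̃ : ℓ∞(𝓛) → Z` affine (of the form `v ↦ L(v) + c`
with `L` linear) and `λ`-Lipschitz. -/
theorem universal_embedding_extend_injective {X : Type*} [MetricSpace X] (t₀ : X)
    {Z : Type*} [NormedAddCommGroup Z] [NormedSpace ℝ Z]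
    (lam : ℝ≥0) (hlam : 1 ≤ lam) {Γ : Type*}
    (I : Z →ₗᵢ[ℝ] lp (fun _ : Γ => ℝ) ∞)
    (P : lp (fun _ : Γ => ℝ) ∞ →L[ℝ] Z)
    (hPI : ∀ z : Z, P (I z) = z) (hP : ‖P‖ ≤ (lam : ℝ))
    (g : X → Z) (hg : LipschitzWith 1 g) :
    ∃ (L : lp (fun _ : LipL t₀ => ℝ) ∞ →ₗ[ℝ] Z) (c : Z),
      LipschitzWith lam (fun v => L v + c) ∧ ∀ x : X, g x = L (univEmb t₀ x) + c := by
  have hIg : LipschitzWith 1 fun x => I (g x) := by simpa using! I.lipschitz.comp hg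
  simpa only [hPI] using universal_embedding_extend_injective_general t₀ hP hIg
end

section
/- Every metric space satisfying the four-point inequality satisfies Reshetnyak's inequality: if (X,d) is a metric space such that for all x₁,x₂,x₃,x₄ ∈ X, d(x₁,x₂) + d(x₃,x₄) ≤ max{d(x₁,x₃) + d(x₂,x₄), d(x₁,x₄) + d(x₂,x₃)}, then for all x₁,x₂,x₃,x₄ ∈ X, d(x₁,x₂)² + d(x₃,x₄)² ≤ d(x₁,x₃)² + d(x₂,x₄)² + d(x₁,x₄)² + d(x₂,x₃)². -/
/-!
For the diagonals `p = d(x₁,x₂)` and `q = d(x₃,x₄)` of a quadrilateral write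
`2 (p² + q²) = (p + q)² + (p - q)²`. The four-point inequality bounds `p + q` by the sum of one
pair of opposite sides, while the triangle inequality bounds `|p - q|` by the sum of either pair,
in particular of the other one. It remains to apply `(a + b)² ≤ 2 (a² + b²)` to both pairs.
-/

theorem sq_add_sq_le_of_abs_add_le_of_abs_sub_le {R : Type*} [CommRing R] [LinearOrder R]
    [IsStrictOrderedRing R] {p q a b c e : R} (hadd : |p + q| ≤ a + b) (hsub : |p - q| ≤ c + e) :
    p ^ 2 + q ^ 2 ≤ a ^ 2 + b ^ 2 + c ^ 2 + e ^ 2 := by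
  have hadd_sq : (p + q) ^ 2 ≤ (a + b) ^ 2 := sq_le_sq.2 (hadd.trans (le_abs_self _))
  have hsub_sq : (p - q) ^ 2 ≤ (c + e) ^ 2 := sq_le_sq.2 (hsub.trans (le_abs_self _))
  refine le_of_mul_le_mul_left ?_ (two_pos : (0 : R) < 2)
  calc 2 * (p ^ 2 + q ^ 2) = (p + q) ^ 2 + (p - q) ^ 2 := by ring
    _ ≤ (a + b) ^ 2 + (c + e) ^ 2 := add_le_add hadd_sq hsub_sq
    _ ≤ 2 * (a ^ 2 + b ^ 2) + 2 * (c ^ 2 + e ^ 2) := add_le_add add_sq_le add_sq_le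
    _ = 2 * (a ^ 2 + b ^ 2 + c ^ 2 + e ^ 2) := by ring

theorem four_point_implies_reshetnyak_general {X : Type*} [PseudoMetricSpace X] {x₁ x₂ x₃ x₄ : X}
    (hfour : dist x₁ x₂ + dist x₃ x₄ ≤
      max (dist x₁ x₃ + dist x₂ x₄) (dist x₁ x₄ + dist x₂ x₃)) :
    dist x₁ x₂ ^ 2 + dist x₃ x₄ ^ 2 ≤
      dist x₁ x₃ ^ 2 + dist x₂ x₄ ^ 2 + dist x₁ x₄ ^ 2 + dist x₂ x₃ ^ 2 := by
  have hsub₁₃ : |dist x₁ x₂ - dist x₃ x₄| ≤ dist x₁ x₃ + dist x₂ x₄ :=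
    dist_dist_dist_le x₁ x₂ x₃ x₄
  have hsub₁₄ : |dist x₁ x₂ - dist x₃ x₄| ≤ dist x₁ x₄ + dist x₂ x₃ :=
    dist_comm x₄ x₃ ▸ dist_dist_dist_le x₁ x₂ x₄ x₃
  have habs : |dist x₁ x₂ + dist x₃ x₄| = dist x₁ x₂ + dist x₃ x₄ :=
    abs_of_nonneg (add_nonneg dist_nonneg dist_nonneg)
  rcases le_max_iff.1 (habs.trans_le hfour) with hadd₁₃ | hadd₁₄
  · exact sq_add_sq_le_of_abs_add_le_of_abs_sub_le hadd₁₃ hsub₁₄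
  · linarith [sq_add_sq_le_of_abs_add_le_of_abs_sub_le hadd₁₄ hsub₁₃]

/-- Every metric space satisfying the four-point inequality
satisfies Reshetnyak's inequality. -/
theorem four_point_implies_reshetnyak {X : Type*} [MetricSpace X]
    (hfour : ∀ x₁ x₂ x₃ x₄ : X, dist x₁ x₂ + dist x₃ x₄ ≤
      max (dist x₁ x₃ + dist x₂ x₄) (dist x₁ x₄ + dist x₂ x₃)) :
    ∀ x₁ x₂ x₃ x₄ : X, dist x₁ x₂ ^ 2 + dist x₃ x₄ ^ 2 ≤
      dist x₁ x₃ ^ 2 + dist x₂ x₄ ^ 2 + dist x₁ x₄ ^ 2 + dist x₂ x₃ ^ 2 :=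
  fun x₁ x₂ x₃ x₄ ↦ four_point_implies_reshetnyak_general (hfour x₁ x₂ x₃ x₄)
end

section
/- Let T be a metric tree (geodesic metric space satisfying the four-point inequality). Let R > 0 and ε ∈ [0,2], and let a, x₁, x₂, m ∈ T satisfy d(a,x₁) ≤ R, d(a,x₂) ≤ R, d(x₁,x₂) ≥ Rε, and d(x₁,m) = d(m,x₂) = d(x₁,x₂)/2 (m is a midpoint of x₁ and x₂). Then d(a,m) ≤ R(1 − ε/2). In particular, the modulus of convexity of T satisfies δ_T(R,ε) ≥ 1 − ε/2. -/
/-- The four-point inequality of Dress (`0`-hyperbolicity in the sense of Gromov), which singles out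
the metric trees among the geodesic metric spaces; subsets of metric trees satisfy it as well. -/
def FourPointInequality (T : Type*) [PseudoMetricSpace T] : Prop :=
  ∀ x₁ x₂ x₃ x₄ : T, dist x₁ x₂ + dist x₃ x₄ ≤
    max (dist x₁ x₃ + dist x₂ x₄) (dist x₁ x₄ + dist x₂ x₃)

section FourPointInequality

variable {T : Type*} [PseudoMetricSpace T]

theorem FourPointInequality.dist_le_max_sub_of_between (hT : FourPointInequality T)
    (a : T) {x₁ x₂ m : T} (hm : dist x₁ m + dist m x₂ = dist x₁ x₂) :
    dist a m ≤ max (dist a x₁ - dist x₁ m) (dist a x₂ - dist m x₂) := by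
  have hfour : dist a m + dist x₁ x₂ ≤
      max (dist a x₁ + dist m x₂) (dist a x₂ + dist x₁ m) := by
    simpa only [dist_comm m x₁] using hT a m x₁ x₂
  calc dist a m
      ≤ max (dist a x₁ + dist m x₂) (dist a x₂ + dist x₁ m) - dist x₁ x₂ :=
        le_sub_iff_add_le.mpr hfour
    _ = max (dist a x₁ - dist x₁ m) (dist a x₂ - dist m x₂) := by
        rw [← max_sub_sub_right, ← hm]
        congr 1 <;> ring

theorem metric_tree_modulus_of_convexity_general (hT : FourPointInequality T) {R ε : ℝ}
    {a x₁ x₂ m : T} (h₁ : dist a x₁ ≤ R) (h₂ : dist a x₂ ≤ R) (h₁₂ : R * ε ≤ dist x₁ x₂)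
    (hm₁ : dist x₁ m = dist x₁ x₂ / 2) (hm₂ : dist m x₂ = dist x₁ x₂ / 2) :
    dist a m ≤ R * (1 - ε / 2) := by
  have hm : dist x₁ m + dist m x₂ = dist x₁ x₂ := by rw [hm₁, hm₂, add_halves]
  calc dist a m
      ≤ max (dist a x₁ - dist x₁ m) (dist a x₂ - dist m x₂) :=
        hT.dist_le_max_sub_of_between a hm
    _ = max (dist a x₁) (dist a x₂) - dist x₁ x₂ / 2 := by
        rw [hm₁, hm₂, max_sub_sub_right]
    _ ≤ R - R * ε / 2 := by
        gcongr
        exact max_le h₁ h₂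
    _ = R * (1 - ε / 2) := by ring

end FourPointInequality

/-- In a metric tree (geodesic metric space satisfying the four-point
inequality): if `R > 0`, `ε ∈ [0,2]`, `d(a,x₁) ≤ R`, `d(a,x₂) ≤ R`, `d(x₁,x₂) ≥ Rε`,
and `m` is a midpoint of `x₁` and `x₂`, then `d(a,m) ≤ R(1 − ε/2)`; in particular the
modulus of convexity of the tree satisfies `δ(R,ε) ≥ 1 − ε/2`. -/
theorem metric_tree_modulus_of_convexity {T : Type*} [MetricSpace T]
    (hgeo : ∀ x y : T, ∃ γ : ℝ → T, γ 0 = x ∧ γ (dist x y) = y ∧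
      ∀ s ∈ Set.Icc (0 : ℝ) (dist x y), ∀ t ∈ Set.Icc (0 : ℝ) (dist x y),
        dist (γ s) (γ t) = |s - t|)
    (hfour : ∀ x₁ x₂ x₃ x₄ : T, dist x₁ x₂ + dist x₃ x₄ ≤
      max (dist x₁ x₃ + dist x₂ x₄) (dist x₁ x₄ + dist x₂ x₃))
    (R ε : ℝ) (hR : 0 < R) (hε : ε ∈ Set.Icc (0 : ℝ) 2)
    (a x₁ x₂ m : T) (h₁ : dist a x₁ ≤ R) (h₂ : dist a x₂ ≤ R)
    (h₁₂ : R * ε ≤ dist x₁ x₂)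
    (hm₁ : dist x₁ m = dist x₁ x₂ / 2) (hm₂ : dist m x₂ = dist x₁ x₂ / 2) :
    dist a m ≤ R * (1 - ε / 2) :=
  metric_tree_modulus_of_convexity_general hfour h₁ h₂ h₁₂ hm₁ hm₂
end

section
/- For p > 1, the spider with n legs of length 1 fails to have negative type p once n > 2^p/(2^p − 2). Precisely: let p > 1 be real and n ∈ ℕ with n > 2^p/(2^p − 2), and define D : Fin (n+1) → Fin (n+1) → ℝ by D(i,j) = 0 if i = j, D(i,j) = 1 if exactly one of i, j equals 0, and D(i,j) = 2 otherwise (these are the distances among the center t₀ and the endpoints t₁,…,tₙ of the spider with n unit legs). Then there exists ξ : Fin (n+1) → ℝ with Σᵢ ξᵢ = 0 and Σᵢ Σⱼ D(i,j)^p · ξᵢ · ξⱼ > 0. -/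
open Finset

/-- The distance matrix of the spider with `n` unit legs, on the points
`t₀` (the center, index `0`) and the endpoints `t₁, …, tₙ`. -/
noncomputable def spiderDist (n : ℕ) (i j : Fin (n + 1)) : ℝ :=
  if i = j then 0 else if i = 0 ∨ j = 0 then 1 else 2

/-!
On weights of total mass zero, with weights `bᵢ` on the endpoints, the quadratic form of negative
type `p` is `(2^p - 2) (∑ bᵢ)² - 2^p ∑ bᵢ²`. For `p > 1` the first coefficient is positive, so
equal weights are the best choice by Cauchy–Schwarz; `bᵢ = 1` gives `(2^p - 2) n² - 2^p n`, which
is positive exactly when `n > 2^p / (2^p - 2)`.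
-/

section SpiderDist

variable {n : ℕ}

theorem spiderDist_self (i : Fin (n + 1)) : spiderDist n i i = 0 := if_pos rfl

theorem spiderDist_zero_succ (j : Fin n) : spiderDist n 0 j.succ = 1 := by
  simp [spiderDist, (Fin.succ_ne_zero j).symm]

theorem spiderDist_succ_zero (i : Fin n) : spiderDist n i.succ 0 = 1 := by
  simp [spiderDist]

theorem spiderDist_succ_succ (i j : Fin n) :
    spiderDist n i.succ j.succ = if i = j then 0 else 2 := by
  simp [spiderDist]

variable {p : ℝ}

theorem sum_spiderDist_succ_succ_rpow_mul (hp : p ≠ 0) (b : Fin n → ℝ) (i : Fin n) :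
    ∑ j, spiderDist n i.succ j.succ ^ p * b j = 2 ^ p * (∑ j, b j - b i) := by
  have rpow_eq (j : Fin n) :
      spiderDist n i.succ j.succ ^ p = 2 ^ p - if i = j then (2 : ℝ) ^ p else 0 := by
    rw [spiderDist_succ_succ]
    split_ifs <;> simp [hp]
  simp only [rpow_eq, sub_mul, ite_mul, zero_mul, sum_sub_distrib, sum_ite_eq, mem_univ, if_true,
    ← mul_sum, mul_sub]

theorem sum_sum_spiderDist_rpow_mul_mul (hp : p ≠ 0) (ξ : Fin (n + 1) → ℝ) :
    ∑ i, ∑ j, spiderDist n i j ^ p * ξ i * ξ j =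
      2 * ξ 0 * ∑ i : Fin n, ξ i.succ +
        2 ^ p * ((∑ i : Fin n, ξ i.succ) ^ 2 - ∑ i : Fin n, ξ i.succ ^ 2) := by
  have center_row :
      ∑ j, spiderDist n 0 j ^ p * ξ 0 * ξ j = ξ 0 * ∑ j : Fin n, ξ j.succ := by
    simp [Fin.sum_univ_succ, spiderDist_self, spiderDist_zero_succ, hp, mul_sum]
  have endpoint_row (i : Fin n) :
      ∑ j, spiderDist n i.succ j ^ p * ξ i.succ * ξ j =
        ξ i.succ * ξ 0 + ξ i.succ * (2 ^ p * (∑ j : Fin n, ξ j.succ - ξ i.succ)) := by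
    rw [← sum_spiderDist_succ_succ_rpow_mul hp (fun j ↦ ξ j.succ), Fin.sum_univ_succ,
      spiderDist_succ_zero, Real.one_rpow, one_mul, mul_sum]
    simp only [mul_assoc, mul_left_comm]
  rw [Fin.sum_univ_succ, center_row, sum_congr rfl fun i _ ↦ endpoint_row i]
  simp only [sum_add_distrib, ← sum_mul, mul_left_comm _ ((2 : ℝ) ^ p), ← mul_sum, mul_sub,
    sum_sub_distrib, ← pow_two]
  ring

theorem sum_sum_spiderDist_rpow_mul_mul_of_sum_eq_zero (hp : p ≠ 0) {ξ : Fin (n + 1) → ℝ}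
    (hξ : ∑ i, ξ i = 0) :
    ∑ i, ∑ j, spiderDist n i j ^ p * ξ i * ξ j =
      (2 ^ p - 2) * (∑ i : Fin n, ξ i.succ) ^ 2 - 2 ^ p * ∑ i : Fin n, ξ i.succ ^ 2 := by
  have center_weight : ξ 0 = -∑ i : Fin n, ξ i.succ := by
    rwa [Fin.sum_univ_succ, add_eq_zero_iff_eq_neg] at hξ
  rw [sum_sum_spiderDist_rpow_mul_mul hp, center_weight]
  ring

end SpiderDist

/-- For `p > 1`, the spider with `n` unit legs fails to have negative
type `p` once `n > 2^p/(2^p − 2)`: there is `ξ` with `Σᵢ ξᵢ = 0` and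
`Σᵢⱼ d(tᵢ,tⱼ)^p ξᵢ ξⱼ > 0`. -/
theorem spider_fails_negative_type (p : ℝ) (hp : 1 < p) (n : ℕ)
    (hn : (2 : ℝ) ^ p / ((2 : ℝ) ^ p - 2) < n) :
    ∃ ξ : Fin (n + 1) → ℝ, ∑ i, ξ i = 0 ∧
      0 < ∑ i, ∑ j, spiderDist n i j ^ p * ξ i * ξ j := by
  have two_lt_rpow : (2 : ℝ) < 2 ^ p := Real.self_lt_rpow_of_one_lt one_lt_two hp
  have coeff_pos : (0 : ℝ) < 2 ^ p - 2 := sub_pos.2 two_lt_rpow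
  have n_pos : (0 : ℝ) < n := (div_pos (by positivity) coeff_pos).trans hn
  have rpow_lt : (2 : ℝ) ^ p < n * (2 ^ p - 2) := (div_lt_iff₀ coeff_pos).1 hn
  let ξ : Fin (n + 1) → ℝ := Fin.cons (-n) fun _ ↦ 1
  have sum_ξ : ∑ i, ξ i = 0 := by simp [ξ, Fin.sum_univ_succ]
  refine ⟨ξ, sum_ξ, ?_⟩
  calc
    (0 : ℝ) < n * (n * (2 ^ p - 2) - 2 ^ p) := mul_pos n_pos (sub_pos.2 rpow_lt)
    _ = (2 ^ p - 2) * n ^ 2 - 2 ^ p * n := by ring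
    _ = ∑ i, ∑ j, spiderDist n i j ^ p * ξ i * ξ j := by
      rw [sum_sum_spiderDist_rpow_mul_mul_of_sum_eq_zero (zero_lt_one.trans hp).ne' sum_ξ]
      simp [ξ]
end

section
/- Let T be a metric tree (geodesic metric space satisfying the four-point inequality) and let A ⊆ T be a nonempty bounded subset. Then for every ε > 0 there exists a point m in the metric convex hull con(A) of A such that d(a,m) < diam(A)/2 + ε for all a ∈ A. -/
/-- A subset `S` of a metric space is metrically convex if together with any two of its
points it contains every point metrically between them. -/
def MetricConvex {T : Type*} [MetricSpace T] (S : Set T) : Prop :=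
  ∀ x ∈ S, ∀ y ∈ S, ∀ z : T, dist x z + dist z y = dist x y → z ∈ S

/-- The metric convex hull of a set: the intersection of all metrically convex sets
containing it. -/
def metricConvexHull {T : Type*} [MetricSpace T] (A : Set T) : Set T :=
  ⋂₀ {S : Set T | MetricConvex S ∧ A ⊆ S}

/-!
Let `m` be a midpoint of two points `x, y ∈ A` that almost realize the diameter of `A`. It lies
between two points of `A`, hence in the hull. For `a ∈ A` the four-point inequality gives
`d(a,m) + d(x,y) ≤ max {d(a,x) + d(m,y), d(a,y) + d(m,x)} ≤ diam A + d(x,y)/2`,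
so `d(a,m) ≤ diam A - d(x,y)/2`, which is almost `diam A / 2`.
-/

section PseudoMetricSpace

variable {X : Type*} [PseudoMetricSpace X]

theorem exists_lt_dist_of_lt_diam {A : Set X} (hA : A.Nonempty) {r : ℝ}
    (hr : r < Metric.diam A) : ∃ x ∈ A, ∃ y ∈ A, r < dist x y := by
  by_contra! hle
  obtain ⟨a, ha⟩ := hA
  have r_nonneg : 0 ≤ r := dist_self a ▸ hle a ha a ha
  exact hr.not_ge (Metric.diam_le_of_forall_dist_le r_nonneg hle)

theorem exists_midpoint_of_geodesic {x y : X} {γ : ℝ → X} (hγ₀ : γ 0 = x)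
    (hγ₁ : γ (dist x y) = y)
    (hγ : ∀ s ∈ Set.Icc (0 : ℝ) (dist x y), ∀ t ∈ Set.Icc (0 : ℝ) (dist x y),
      dist (γ s) (γ t) = |s - t|) :
    ∃ m, dist x m = dist x y / 2 ∧ dist m y = dist x y / 2 := by
  have dist_xy_nonneg : 0 ≤ dist x y := dist_nonneg
  have half_mem : dist x y / 2 ∈ Set.Icc 0 (dist x y) := ⟨by linarith, by linarith⟩
  refine ⟨γ (dist x y / 2), ?_, ?_⟩
  · calc dist x (γ (dist x y / 2))
        = dist (γ 0) (γ (dist x y / 2)) := by rw [hγ₀]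
      _ = |0 - dist x y / 2| := hγ 0 (Set.left_mem_Icc.2 dist_xy_nonneg) _ half_mem
      _ = dist x y / 2 := by rw [zero_sub, abs_neg, abs_of_nonneg half_mem.1]
  · calc dist (γ (dist x y / 2)) y
        = dist (γ (dist x y / 2)) (γ (dist x y)) := by rw [hγ₁]
      _ = |dist x y / 2 - dist x y| :=
          hγ _ half_mem _ (Set.right_mem_Icc.2 dist_xy_nonneg)
      _ = dist x y / 2 := by rw [half_sub, abs_neg, abs_of_nonneg half_mem.1]

theorem dist_midpoint_le_of_four_point {a m x y : X}
    (hfour : dist a m + dist x y ≤ max (dist a x + dist m y) (dist a y + dist m x))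
    (hxm : dist x m = dist x y / 2) (hmy : dist m y = dist x y / 2) :
    dist a m ≤ max (dist a x) (dist a y) - dist x y / 2 := by
  rw [dist_comm m x, hxm, hmy, max_add_add_right] at hfour
  linarith

end PseudoMetricSpace

section MetricConvexHull

variable {T : Type*} [MetricSpace T]

theorem subset_metricConvexHull (A : Set T) : A ⊆ metricConvexHull A :=
  Set.subset_sInter fun _ hS => hS.2

theorem metricConvex_metricConvexHull (A : Set T) : MetricConvex (metricConvexHull A) :=
  fun x hx y hy z hz S hS => hS.1 x (hx S hS) y (hy S hS) z hz

end MetricConvexHull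

theorem almost_center_in_convex_hull_general {T : Type*} [MetricSpace T]
    (hmid : ∀ x y : T, ∃ m, dist x m = dist x y / 2 ∧ dist m y = dist x y / 2)
    (hfour : ∀ x₁ x₂ x₃ x₄ : T, dist x₁ x₂ + dist x₃ x₄ ≤
      max (dist x₁ x₃ + dist x₂ x₄) (dist x₁ x₄ + dist x₂ x₃))
    (A : Set T) (hA : A.Nonempty) (hAb : Bornology.IsBounded A)
    (ε : ℝ) (hε : 0 < ε) :
    ∃ m ∈ metricConvexHull A, ∀ a ∈ A, dist a m < Metric.diam A / 2 + ε := by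
  obtain ⟨x, hx, y, hy, hxy⟩ : ∃ x ∈ A, ∃ y ∈ A, Metric.diam A - 2 * ε < dist x y :=
    exists_lt_dist_of_lt_diam hA (by linarith)
  obtain ⟨m, hxm, hmy⟩ := hmid x y
  have m_mem_hull : m ∈ metricConvexHull A :=
    metricConvex_metricConvexHull A x (subset_metricConvexHull A hx) y
      (subset_metricConvexHull A hy) m (by rw [hxm, hmy, add_halves])
  refine ⟨m, m_mem_hull, fun a ha => ?_⟩
  calc dist a m
      ≤ max (dist a x) (dist a y) - dist x y / 2 :=
        dist_midpoint_le_of_four_point (hfour a m x y) hxm hmy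
    _ ≤ Metric.diam A - dist x y / 2 := by
        gcongr
        exact max_le (Metric.dist_le_diam_of_mem hAb ha hx) (Metric.dist_le_diam_of_mem hAb ha hy)
    _ < Metric.diam A / 2 + ε := by linarith

/-- In a metric tree (geodesic metric space satisfying the four-point
inequality), for every nonempty bounded `A` and every `ε > 0` there is a point `m` of
the metric convex hull of `A` with `d(a,m) < diam(A)/2 + ε` for all `a ∈ A`. -/
theorem almost_center_in_convex_hull {T : Type*} [MetricSpace T]
    (hgeo : ∀ x y : T, ∃ γ : ℝ → T, γ 0 = x ∧ γ (dist x y) = y ∧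
      ∀ s ∈ Set.Icc (0 : ℝ) (dist x y), ∀ t ∈ Set.Icc (0 : ℝ) (dist x y),
        dist (γ s) (γ t) = |s - t|)
    (hfour : ∀ x₁ x₂ x₃ x₄ : T, dist x₁ x₂ + dist x₃ x₄ ≤
      max (dist x₁ x₃ + dist x₂ x₄) (dist x₁ x₄ + dist x₂ x₃))
    (A : Set T) (hA : A.Nonempty) (hAb : Bornology.IsBounded A)
    (ε : ℝ) (hε : 0 < ε) :
    ∃ m ∈ metricConvexHull A, ∀ a ∈ A, dist a m < Metric.diam A / 2 + ε :=
  almost_center_in_convex_hull_general (fun x y => let ⟨_, hγ₀, hγ₁, hγ⟩ := hgeo x y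
    exists_midpoint_of_geodesic hγ₀ hγ₁ hγ) hfour A hA hAb ε hε
end

section
/- Let X be a real normed space and A ⊆ X a nonempty bounded subset. Then the sequence of Kolmogorov diameters δ_n(A,X) converges, as n → ∞, to the ball measure of non-compactness β(A,X), and likewise the sequence of affine Kolmogorov diameters δ_n^{(a)}(A,X) converges to β(A,X). -/
/-!
The limits follow by squeezing from `β(A) ≤ δ_n^{(a)}(A) ≤ δ_n(A)`, valid for every `n`, and the
bound `δ_n(A) ≤ b` for all large `n` whenever finitely many balls of radius `b` cover `A`: the
centers of those balls span a finite-dimensional subspace.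

For the first inequality, suppose that every point of `A` is within `r` of a finite-dimensional
affine subspace `M`. As `A` is bounded, it is already within `r` of a bounded, hence totally
bounded, piece of `M`, and a finite `ε`-net of that piece is a finite `(r + ε)`-net of `A`.
-/

open Filter

/-- The `n`-th Kolmogorov diameter of `A ⊆ X`: the infimum over linear subspaces `M`
of dimension at most `n` of `sup_{a ∈ A} dist(a, M)`. -/
noncomputable def kolmogorovDiam {X : Type*} [NormedAddCommGroup X] [NormedSpace ℝ X]
    (A : Set X) (n : ℕ) : ℝ :=
  sInf {r : ℝ | ∃ M : Submodule ℝ X, Module.rank ℝ M ≤ n ∧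
    r = ⨆ a : A, Metric.infDist (a : X) (M : Set X)}

/-- The `n`-th affine Kolmogorov diameter of `A ⊆ X`: the infimum over nonempty affine
subspaces `M` of dimension at most `n` of `sup_{a ∈ A} dist(a, M)`. -/
noncomputable def affineKolmogorovDiam {X : Type*} [NormedAddCommGroup X]
    [NormedSpace ℝ X] (A : Set X) (n : ℕ) : ℝ :=
  sInf {r : ℝ | ∃ M : AffineSubspace ℝ X, (M : Set X).Nonempty ∧
    Module.rank ℝ M.direction ≤ n ∧
    r = ⨆ a : A, Metric.infDist (a : X) (M : Set X)}

/-- The ball (Hausdorff) measure of non-compactness of `A ⊆ X`: the infimum of the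
`b > 0` such that `A` is covered by finitely many closed balls of radius `b` with
centers in `X`. -/
noncomputable def ballMeasureNoncompact {X : Type*} [NormedAddCommGroup X]
    (A : Set X) : ℝ :=
  sInf {b : ℝ | 0 < b ∧ ∃ s : Finset X, A ⊆ ⋃ c ∈ s, Metric.closedBall c b}

section Deviation

variable {X : Type*} [PseudoMetricSpace X] {A M s : Set X} {p : X} {b r R : ℝ}

/-- The deviation `sup_{a ∈ A} dist(a, M)` of `A` from `M`, which the Kolmogorov diameters minimize
over `M`. It takes the junk value `0` when the supremum is infinite or `M` is empty. -/
noncomputable def deviation (A M : Set X) : ℝ :=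
  ⨆ a : A, Metric.infDist (a : X) M

lemma deviation_nonneg (A M : Set X) : 0 ≤ deviation A M :=
  Real.iSup_nonneg fun _ => Metric.infDist_nonneg

lemma deviation_le_of_subset_iUnion_closedBall (hsM : s ⊆ M) (hb : 0 ≤ b)
    (hA : A ⊆ ⋃ c ∈ s, Metric.closedBall c b) : deviation A M ≤ b := by
  refine Real.iSup_le (fun a => ?_) hb
  obtain ⟨c, hc, hac⟩ := Set.mem_iUnion₂.1 (hA a.2)
  exact (Metric.infDist_le_dist_of_mem (hsM hc)).trans hac

lemma bddAbove_range_infDist (hA : Bornology.IsBounded A) (hM : M.Nonempty) :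
    BddAbove (Set.range fun a : A => Metric.infDist (a : X) M) := by
  obtain ⟨p, hp⟩ := hM
  obtain ⟨R, hR⟩ := hA.subset_closedBall p
  refine ⟨R, ?_⟩
  rintro _ ⟨a, rfl⟩
  exact (Metric.infDist_le_dist_of_mem hp).trans (hR a.2)

lemma subset_thickening_of_deviation_lt (hA : Bornology.IsBounded A) (hM : M.Nonempty)
    (hr : deviation A M < r) : A ⊆ Metric.thickening r M := fun a ha =>
  (Metric.mem_thickening_iff_infDist_lt hM).2
    ((le_ciSup (bddAbove_range_infDist hA hM) ⟨a, ha⟩).trans_lt hr)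

lemma subset_thickening_inter_closedBall (hAR : A ⊆ Metric.closedBall p R)
    (hAM : A ⊆ Metric.thickening r M) :
    A ⊆ Metric.thickening r (M ∩ Metric.closedBall p (r + R)) := by
  intro a ha
  obtain ⟨m, hm, ham⟩ := Metric.mem_thickening_iff.1 (hAM ha)
  have hmp : dist m p ≤ r + R :=
    (dist_triangle_left m p a).trans (add_le_add ham.le (hAR ha))
  exact Metric.mem_thickening_iff.2 ⟨m, ⟨hm, hmp⟩, ham⟩

end Deviation

lemma totallyBounded_of_isBounded_of_subset_affineSubspace {𝕜 V P : Type*}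
    [NontriviallyNormedField 𝕜] [LocallyCompactSpace 𝕜] [NormedAddCommGroup V] [NormedSpace 𝕜 V]
    [PseudoMetricSpace P] [NormedAddTorsor V P] {M : AffineSubspace 𝕜 P}
    [FiniteDimensional 𝕜 M.direction] {S : Set P} (hS : Bornology.IsBounded S)
    (hSM : S ⊆ M) : TotallyBounded S := by
  obtain rfl | ⟨p, hp⟩ := S.eq_empty_or_nonempty
  · exact totallyBounded_empty
  obtain ⟨R, hR⟩ := hS.subset_closedBall p
  have : ProperSpace M.direction := FiniteDimensional.proper 𝕜 M.direction
  have hcompact : IsCompact ((fun v : M.direction => (v : V) +ᵥ p) '' Metric.closedBall 0 R) :=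
    (isCompact_closedBall 0 R).image (by fun_prop)
  refine hcompact.totallyBounded.subset fun q hq => ?_
  refine ⟨⟨q -ᵥ p, M.vsub_mem_direction (hSM hq) (hSM hp)⟩, ?_, vsub_vadd q p⟩
  rw [mem_closedBall_zero_iff, Submodule.coe_norm, ← dist_eq_norm_vsub]
  exact hR hq

section BallMeasure

variable {X : Type*} [NormedAddCommGroup X] {A K : Set X} {b r : ℝ}

lemma ballMeasureNoncompact_le_of_subset_iUnion_closedBall (hb : 0 < b) {s : Finset X}
    (hA : A ⊆ ⋃ c ∈ s, Metric.closedBall c b) : ballMeasureNoncompact A ≤ b :=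
  csInf_le ⟨0, fun _ h => h.1.le⟩ ⟨hb, s, hA⟩

lemma exists_finset_cover_of_ballMeasureNoncompact_lt (hA : Bornology.IsBounded A)
    (hr : ballMeasureNoncompact A < r) :
    ∃ b, 0 < b ∧ b < r ∧ ∃ s : Finset X, A ⊆ ⋃ c ∈ s, Metric.closedBall c b := by
  obtain ⟨R, hR_pos, hR⟩ := hA.subset_closedBall_lt 0 (0 : X)
  have hcovers : {b : ℝ | 0 < b ∧ ∃ s : Finset X, A ⊆ ⋃ c ∈ s, Metric.closedBall c b}.Nonempty :=
    ⟨R, hR_pos, {0}, by simpa using hR⟩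
  obtain ⟨b, ⟨hb, hcover⟩, hbr⟩ := exists_lt_of_csInf_lt hcovers hr
  exact ⟨b, hb, hbr, hcover⟩

lemma ballMeasureNoncompact_le_of_subset_thickening (hK : TotallyBounded K) (hr : 0 ≤ r)
    (hA : A ⊆ Metric.thickening r K) : ballMeasureNoncompact A ≤ r := by
  refine le_of_forall_pos_le_add fun ε hε => ?_
  obtain ⟨t, ht, hKt⟩ := Metric.totallyBounded_iff.1 hK ε hε
  refine ballMeasureNoncompact_le_of_subset_iUnion_closedBall (by positivity) (s := ht.toFinset) ?_
  calc
    A ⊆ Metric.thickening r K := hA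
    _ ⊆ Metric.thickening r (Metric.thickening ε t) :=
      Metric.thickening_subset_of_subset r (by rwa [Metric.thickening_eq_biUnion_ball])
    _ ⊆ Metric.thickening (r + ε) t := Metric.thickening_thickening_subset r ε t
    _ = ⋃ c ∈ ht.toFinset, Metric.ball c (r + ε) := by
      simp only [Metric.thickening_eq_biUnion_ball, ht.mem_toFinset]
    _ ⊆ ⋃ c ∈ ht.toFinset, Metric.closedBall c (r + ε) :=
      Set.iUnion₂_mono fun _ _ => Metric.ball_subset_closedBall

end BallMeasure

section KolmogorovDiam

variable {X : Type*} [NormedAddCommGroup X] [NormedSpace ℝ X] {A : Set X} {n : ℕ}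

lemma ballMeasureNoncompact_le_deviation (hA : Bornology.IsBounded A) (M : AffineSubspace ℝ X)
    [FiniteDimensional ℝ M.direction] (hM : (M : Set X).Nonempty) :
    ballMeasureNoncompact A ≤ deviation A M := by
  refine le_of_forall_gt_imp_ge_of_dense fun r hr => ?_
  obtain ⟨R, hR⟩ := hA.subset_closedBall 0
  have hpiece : TotallyBounded ((M : Set X) ∩ Metric.closedBall 0 (r + R)) :=
    totallyBounded_of_isBounded_of_subset_affineSubspace
      (Metric.isBounded_closedBall.subset Set.inter_subset_right) Set.inter_subset_left
  exact ballMeasureNoncompact_le_of_subset_thickening hpiece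
    ((deviation_nonneg A M).trans hr.le)
    (subset_thickening_inter_closedBall hR (subset_thickening_of_deviation_lt hA hM hr))

lemma kolmogorovDiam_le_deviation (A : Set X) {M : Submodule ℝ X} (hM : Module.rank ℝ M ≤ n) :
    kolmogorovDiam A n ≤ deviation A M := by
  refine csInf_le ⟨0, ?_⟩ ⟨M, hM, rfl⟩
  rintro _ ⟨N, -, rfl⟩
  exact deviation_nonneg A N

lemma affineKolmogorovDiam_le_deviation (A : Set X) {M : AffineSubspace ℝ X}
    (hM_nonempty : (M : Set X).Nonempty) (hM : Module.rank ℝ M.direction ≤ n) :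
    affineKolmogorovDiam A n ≤ deviation A M := by
  refine csInf_le ⟨0, ?_⟩ ⟨M, hM_nonempty, hM, rfl⟩
  rintro _ ⟨N, -, -, rfl⟩
  exact deviation_nonneg A N

lemma affineKolmogorovDiam_le_kolmogorovDiam (A : Set X) (n : ℕ) :
    affineKolmogorovDiam A n ≤ kolmogorovDiam A n := by
  refine le_csInf ⟨_, ⊥, by simp, rfl⟩ ?_
  rintro _ ⟨M, hM, rfl⟩
  exact affineKolmogorovDiam_le_deviation A (M := M.toAffineSubspace) ⟨0, M.zero_mem⟩
    (by rwa [Submodule.toAffineSubspace_direction])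

lemma ballMeasureNoncompact_le_affineKolmogorovDiam (hA : Bornology.IsBounded A) (n : ℕ) :
    ballMeasureNoncompact A ≤ affineKolmogorovDiam A n := by
  refine le_csInf ⟨_, (⊥ : Submodule ℝ X).toAffineSubspace, ⟨0, zero_mem (⊥ : Submodule ℝ X)⟩,
    by rw [Submodule.toAffineSubspace_direction]; simp, rfl⟩ ?_
  rintro _ ⟨M, hM_nonempty, hM, rfl⟩
  have : FiniteDimensional ℝ M.direction :=
    Module.rank_lt_aleph0_iff.1 (hM.trans_lt Cardinal.natCast_lt_aleph0)
  exact ballMeasureNoncompact_le_deviation hA M hM_nonempty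

lemma kolmogorovDiam_le_of_subset_iUnion_closedBall {b : ℝ} (hb : 0 ≤ b) {s : Finset X}
    (hA : A ⊆ ⋃ c ∈ s, Metric.closedBall c b) (hn : s.card ≤ n) : kolmogorovDiam A n ≤ b := by
  have hrank : Module.rank ℝ (Submodule.span ℝ (s : Set X)) ≤ n :=
    (rank_span_finset_le s).trans (by exact_mod_cast hn)
  exact (kolmogorovDiam_le_deviation A hrank).trans
    (deviation_le_of_subset_iUnion_closedBall Submodule.subset_span hb hA)

lemma eventually_kolmogorovDiam_lt (hA : Bornology.IsBounded A) {r : ℝ}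
    (hr : ballMeasureNoncompact A < r) : ∀ᶠ n in atTop, kolmogorovDiam A n < r := by
  obtain ⟨b, hb, hbr, s, hs⟩ := exists_finset_cover_of_ballMeasureNoncompact_lt hA hr
  filter_upwards [eventually_ge_atTop s.card] with n hn
  exact (kolmogorovDiam_le_of_subset_iUnion_closedBall hb.le hs hn).trans_lt hbr

end KolmogorovDiam

/-- For a nonempty bounded subset `A` of a real normed space `X`, the
Kolmogorov diameters `δ_n(A,X)` converge to the ball measure of non-compactness
`β(A,X)` as `n → ∞`, and likewise for the affine Kolmogorov diameters. -/
theorem kolmogorov_diam_tendsto_ballMeasure {X : Type*} [NormedAddCommGroup X]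
    [NormedSpace ℝ X] (A : Set X) (hA : A.Nonempty) (hAb : Bornology.IsBounded A) :
    Tendsto (fun n => kolmogorovDiam A n) atTop (nhds (ballMeasureNoncompact A)) ∧
    Tendsto (fun n => affineKolmogorovDiam A n) atTop (nhds (ballMeasureNoncompact A)) := by
  have hβ_le := ballMeasureNoncompact_le_affineKolmogorovDiam hAb
  have haffine_le := affineKolmogorovDiam_le_kolmogorovDiam A
  have hlim : Tendsto (fun n => kolmogorovDiam A n) atTop (nhds (ballMeasureNoncompact A)) :=
    tendsto_order.2
      ⟨fun _ hr => .of_forall fun n => hr.trans_le ((hβ_le n).trans (haffine_le n)),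
        fun _ hr => eventually_kolmogorovDiam_lt hAb hr⟩
  exact ⟨hlim, tendsto_of_tendsto_of_tendsto_of_le_of_le tendsto_const_nhds hlim hβ_le haffine_le⟩
end
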